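/- arXiv:2401.13813 — 3 statements merged into one kernel-verified Lean document; each statement's English description precedes it below -/
import Mathlib

section
/- Let 0 < α < 1, T > 0, Y = ℝⁿ, and let y ∈ AC^α_∞([0,T],Y), i.e. y(t) = y(0) + (I^α_{0+}φ)(t) on [0,T] for some φ ∈ L^∞([0,T],Y). Then the Caputo derivative (^C D^α_{0+} y)(t) is well defined for a.e. t ∈ [0,T], there exists an essentially bounded function agreeing with it a.e. (so (^C D^α_{0+} y) ∈ L^∞([0,T],Y)), and for every t ∈ [0,T] one has (I^α_{0+}(^C D^α_{0+} y))(t) = y(t) − y(0). -/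
/-!
Write `y - y(0) = I^α φ` on `[0, T]`. The Caputo derivative is the derivative of
`I^{1-α} (y - y(0)) = I^{1-α} I^α φ`, and the composition rule `RLint_comp` (Fubini together with the
Beta integral `integral_beta_kernel`) turns this function into the primitive `s ↦ ∫₀ˢ φ` on `[0, T]`.
By the Lebesgue differentiation theorem the primitive is differentiable with derivative `φ(t)` at
a.e. `t`. Hence the Caputo derivative agrees with `φ` a.e.; all three claims follow, the last one
because `I^α` sees its argument only up to null sets.
-/

open MeasureTheory Set Filter Topology

/-- The Riemann–Liouville fractional integral of order `α` based at `0`: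
`(I^α_{0+} φ)(t) = (1/Γ(α)) ∫₀ᵗ (t−τ)^{α−1} φ(τ) dτ`. -/
noncomputable def RLint {E : Type*} [NormedAddCommGroup E] [NormedSpace ℝ E]
    (α : ℝ) (φ : ℝ → E) (t : ℝ) : E :=
  (Real.Gamma α)⁻¹ • ∫ τ in (0:ℝ)..t, ((t - τ) ^ (α - 1)) • φ τ

/-- The Caputo fractional derivative of order `α` based at `0`, realized (for functions that
need not be pointwise differentiable) as the Riemann–Liouville derivative of `y - y 0`:
`(^C D^α_{0+} y)(t) = d/dt [ (1/Γ(1−α)) ∫₀ᵗ (t−τ)^{−α} (y(τ) − y(0)) dτ ]`. -/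
noncomputable def caputoD {E : Type*} [NormedAddCommGroup E] [NormedSpace ℝ E]
    (α : ℝ) (y : ℝ → E) (t : ℝ) : E :=
  deriv (fun s => (Real.Gamma (1 - α))⁻¹ • ∫ τ in (0:ℝ)..s, ((s - τ) ^ (-α)) • (y τ - y 0)) t

/-- Euler's Beta integral `B(α, 1 - α) = Γ(α) Γ(1 - α)`, moved to the interval `(σ, s)`. -/
lemma integral_beta_kernel {α σ s : ℝ} (hα0 : 0 < α) (hα1 : α < 1) (h : σ < s) :
    ∫ τ in Ioo σ s, (s - τ) ^ (-α) * (τ - σ) ^ (α - 1) = Real.Gamma α * Real.Gamma (1 - α) := by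
  have ha : 0 < s - σ := sub_pos.2 h
  rw [← integral_Ioc_eq_integral_Ioo, ← intervalIntegral.integral_of_le h.le]
  have e1 : ∫ τ in σ..s, (s - τ) ^ (-α) * (τ - σ) ^ (α - 1)
      = ∫ x in (0:ℝ)..(s - σ), ((s - σ) - x) ^ (-α) * x ^ (α - 1) := by
    have := intervalIntegral.integral_comp_sub_right (a := σ) (b := s)
      (fun x => ((s - σ) - x) ^ (-α) * x ^ (α - 1)) σ
    rw [sub_self] at this
    rw [← this]
    congr 1 with τ
    congr 2
    ring
  rw [e1]
  have e2 := Complex.betaIntegral_scaled (α : ℂ) (1 - α : ℂ) ha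
  have e3 := Complex.Gamma_mul_Gamma_eq_betaIntegral (s := (α : ℂ)) (t := (1 - α : ℂ))
    (by simpa using hα0) (by simpa using hα1)
  rw [add_sub_cancel, Complex.Gamma_one, one_mul] at e3
  rw [add_sub_cancel, sub_self, Complex.cpow_zero, one_mul, ← e3] at e2
  rw [← Complex.ofReal_inj, ← intervalIntegral.integral_ofReal, Complex.ofReal_mul,
    ← Complex.Gamma_ofReal, ← Complex.Gamma_ofReal, Complex.ofReal_sub, Complex.ofReal_one, ← e2]
  refine intervalIntegral.integral_congr fun x hx => ?_
  rw [uIcc_of_le ha.le] at hx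
  rw [Complex.ofReal_mul, Complex.ofReal_cpow (sub_nonneg.2 hx.2), Complex.ofReal_cpow hx.1, mul_comm]
  push_cast
  congr 2
  ring

/-- The composition rule `I^{1-α} I^α φ = I^1 φ`: after exchanging the order of integration over
the triangle `0 < σ < τ < s`, the inner integral is `integral_beta_kernel`. The nonvanishing of that
integral also gives the integrability of the kernel, hence the absolute convergence. -/
lemma RLint_comp {n : ℕ} {α s : ℝ} (hα0 : 0 < α) (hα1 : α < 1) (hs : 0 ≤ s)
    {φ : ℝ → (Fin n → ℝ)} (hφ : IntegrableOn φ (Ioo 0 s)) :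
    (Real.Gamma (1 - α))⁻¹ • ∫ τ in (0:ℝ)..s, ((s - τ) ^ (-α)) • RLint α φ τ
      = ∫ τ in (0:ℝ)..s, φ τ := by
  have hG : 0 < Real.Gamma α := Real.Gamma_pos_of_pos hα0
  have hG' : 0 < Real.Gamma (1 - α) := Real.Gamma_pos_of_pos (sub_pos.2 hα1)
  set ν : Measure ℝ := volume.restrict (Ioo 0 s) with hν
  -- The kernel is extended by zero off the triangle, so that Fubini applies on a square.
  let k : ℝ → ℝ → ℝ := fun τ σ =>
    (Iio τ).indicator (fun σ => (s - τ) ^ (-α) * (τ - σ) ^ (α - 1)) σ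
  have hk : ∀ σ, (fun τ => k τ σ)
      = (Ioi σ).indicator (fun τ => (s - τ) ^ (-α) * (τ - σ) ^ (α - 1)) := by
    intro σ; ext τ; simp only [k, indicator, mem_Iio, mem_Ioi]
  have hk0 : ∀ σ, ∀ᵐ τ ∂ν, 0 ≤ k τ σ := by
    intro σ
    filter_upwards [ae_restrict_mem measurableSet_Ioo] with τ hτ
    refine indicator_apply_nonneg fun hσ => ?_
    exact mul_nonneg (Real.rpow_nonneg (sub_nonneg.2 hτ.2.le) _)
      (Real.rpow_nonneg (sub_nonneg.2 (le_of_lt hσ)) _)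
  have hkint : ∀ σ ∈ Ioo 0 s, ∫ τ, k τ σ ∂ν = Real.Gamma α * Real.Gamma (1 - α) := by
    intro σ hσ
    rw [hk, integral_indicator measurableSet_Ioi, hν, Measure.restrict_restrict measurableSet_Ioi,
      ← integral_beta_kernel hα0 hα1 hσ.2]
    congr 2
    ext τ
    simp only [mem_inter_iff, mem_Ioi, mem_Ioo]
    exact ⟨fun h => ⟨h.1, h.2.2⟩, fun h => ⟨h.1, hσ.1.trans h.1, h.2⟩⟩
  -- A Bochner integral with nonzero value cannot be the junk value of a non-integrable function.
  have hkI : ∀ σ ∈ Ioo 0 s, Integrable (fun τ => k τ σ) ν := fun σ hσ =>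
    .of_integral_ne_zero (by rw [hkint σ hσ]; positivity)
  have hkm : Measurable (fun p : ℝ × ℝ => k p.1 p.2) := by
    have : (fun p : ℝ × ℝ => k p.1 p.2) = {p : ℝ × ℝ | p.2 < p.1}.indicator
        (fun p => (s - p.1) ^ (-α) * (p.1 - p.2) ^ (α - 1)) := by
      ext p; simp only [k, indicator, mem_Iio, mem_ofPred_eq]
    rw [this]
    exact Measurable.indicator (by fun_prop) (measurableSet_lt measurable_snd measurable_fst)
  have hF : Integrable (Function.uncurry fun τ σ => k τ σ • φ σ) (ν.prod ν) := by
    have hm : AEStronglyMeasurable (Function.uncurry fun τ σ => k τ σ • φ σ) (ν.prod ν) :=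
      hkm.aestronglyMeasurable.smul hφ.aestronglyMeasurable.comp_snd
    rw [integrable_prod_iff' hm]
    constructor
    · filter_upwards [ae_restrict_mem measurableSet_Ioo] with σ hσ
      exact (hkI σ hσ).smul_const (φ σ)
    · refine (hφ.norm.const_mul (Real.Gamma α * Real.Gamma (1 - α))).congr ?_
      filter_upwards [ae_restrict_mem measurableSet_Ioo] with σ hσ
      rw [← hkint σ hσ, ← integral_mul_const]
      refine integral_congr_ae ?_
      filter_upwards [hk0 σ] with τ hτ
      simp only [Function.uncurry, norm_smul, Real.norm_of_nonneg hτ]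
  have swap := integral_integral_swap hF
  have hL : ∫ τ, ∫ σ, k τ σ • φ σ ∂ν ∂ν
      = Real.Gamma α • ∫ τ in (0:ℝ)..s, ((s - τ) ^ (-α)) • RLint α φ τ := by
    rw [intervalIntegral.integral_of_le hs, integral_Ioc_eq_integral_Ioo, ← integral_smul]
    refine setIntegral_congr_fun measurableSet_Ioo fun τ hτ => ?_
    have : (fun σ => k τ σ • φ σ)
        = (Iio τ).indicator (fun σ => ((s - τ) ^ (-α)) • ((τ - σ) ^ (α - 1)) • φ σ) := by
      ext1 σ
      by_cases h : σ < τ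
      · simp [k, indicator, h, mul_smul]
      · simp [k, indicator, h]
    simp only [RLint]
    rw [this, integral_indicator measurableSet_Iio, hν,
      Measure.restrict_restrict measurableSet_Iio, integral_smul, smul_comm (Real.Gamma α),
      smul_inv_smul₀ hG.ne', intervalIntegral.integral_of_le hτ.1.le, integral_Ioc_eq_integral_Ioo]
    congr 3
    ext σ
    simp only [mem_inter_iff, mem_Iio, mem_Ioo]
    exact ⟨fun h => ⟨h.2.1, h.1⟩, fun h => ⟨h.2, h.1, h.2.trans hτ.2⟩⟩
  have hR : ∫ σ, ∫ τ, k τ σ • φ σ ∂ν ∂ν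
      = (Real.Gamma α * Real.Gamma (1 - α)) • ∫ τ in (0:ℝ)..s, φ τ := by
    rw [intervalIntegral.integral_of_le hs, integral_Ioc_eq_integral_Ioo, ← integral_smul]
    refine setIntegral_congr_fun measurableSet_Ioo fun σ hσ => ?_
    rw [integral_smul_const, hkint σ hσ]
  rw [hL, hR, mul_smul] at swap
  rw [smul_right_injective _ hG.ne' swap, inv_smul_smul₀ hG'.ne']

/-- if `y ∈ AC^α_∞([0,T],ℝⁿ)`, i.e. `y(t) = y(0) + (I^α_{0+}φ)(t)` on `[0,T]`
for some essentially bounded measurable `φ`, then the Caputo derivative of `y` is well defined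
(the defining function is differentiable) at a.e. `t ∈ [0,T]`, there is an essentially bounded
function agreeing with it a.e. on `[0,T]`, and `(I^α_{0+}(^C D^α_{0+} y))(t) = y(t) − y(0)`
for every `t ∈ [0,T]`. -/
theorem caputo_of_ACalpha_welldefined {n : ℕ} (α T : ℝ) (hα0 : 0 < α) (hα1 : α < 1)
    (hT : 0 < T) (y φ : ℝ → (Fin n → ℝ))
    (hφmeas : AEStronglyMeasurable φ (volume.restrict (Icc (0:ℝ) T)))
    (hφbdd : ∃ C : ℝ, ∀ᵐ t ∂(volume.restrict (Icc (0:ℝ) T)), ‖φ t‖ ≤ C)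
    (hy : ∀ t ∈ Icc (0:ℝ) T, y t = y 0 + RLint α φ t) :
    (∀ᵐ t ∂(volume.restrict (Icc (0:ℝ) T)),
        DifferentiableAt ℝ
          (fun s => (Real.Gamma (1 - α))⁻¹ • ∫ τ in (0:ℝ)..s, ((s - τ) ^ (-α)) • (y τ - y 0)) t)
      ∧ (∃ g : ℝ → (Fin n → ℝ),
          AEStronglyMeasurable g (volume.restrict (Icc (0:ℝ) T)) ∧
          (∃ C : ℝ, ∀ᵐ t ∂(volume.restrict (Icc (0:ℝ) T)), ‖g t‖ ≤ C) ∧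
          (∀ᵐ t ∂(volume.restrict (Icc (0:ℝ) T)), g t = caputoD α y t))
      ∧ (∀ t ∈ Icc (0:ℝ) T, RLint α (caputoD α y) t = y t - y 0) := by
  obtain ⟨C, hC⟩ := hφbdd
  have hφI : IntegrableOn φ (Icc 0 T) :=
    Integrable.of_bound (hφmeas) C hC
  have hφII : IntervalIntegrable φ volume 0 T :=
    (intervalIntegrable_iff_integrableOn_Icc_of_le hT.le).2 hφI
  have key : ∀ s ∈ Icc (0:ℝ) T,
      (Real.Gamma (1 - α))⁻¹ • ∫ τ in (0:ℝ)..s, ((s - τ) ^ (-α)) • (y τ - y 0)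
        = ∫ τ in (0:ℝ)..s, φ τ := by
    intro s hs
    rw [← RLint_comp hα0 hα1 hs.1
      (hφI.mono_set (Ioo_subset_Icc_self.trans (Icc_subset_Icc_right hs.2)))]
    congr 1
    refine intervalIntegral.integral_congr fun τ hτ => ?_
    rw [uIcc_of_le hs.1] at hτ
    rw [hy τ ⟨hτ.1, hτ.2.trans hs.2⟩, add_sub_cancel_left]
  have hD : ∀ᵐ t ∂(volume.restrict (Icc (0:ℝ) T)), HasDerivAt
      (fun s => (Real.Gamma (1 - α))⁻¹ • ∫ τ in (0:ℝ)..s, ((s - τ) ^ (-α)) • (y τ - y 0))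
      (φ t) t := by
    -- The two functions agree near `t` only when `t` is an interior point.
    rw [← restrict_Ioo_eq_restrict_Icc]
    filter_upwards [ae_restrict_mem measurableSet_Ioo,
      ae_restrict_of_ae hφII.ae_hasDerivAt_integral] with t ht h
    rw [uIcc_of_le hT.le] at h
    refine (h (Ioo_subset_Icc_self ht) 0 ⟨le_rfl, hT.le⟩).congr_of_eventuallyEq ?_
    filter_upwards [Ioo_mem_nhds ht.1 ht.2] with s hs
    exact key s (Ioo_subset_Icc_self hs)
  have hDφ : ∀ᵐ t ∂(volume.restrict (Icc (0:ℝ) T)), φ t = caputoD α y t :=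
    hD.mono fun t h => h.deriv.symm
  refine ⟨hD.mono fun t h => h.differentiableAt, ⟨φ, hφmeas, ⟨C, hC⟩, hDφ⟩, fun t ht => ?_⟩
  rw [hy t ht, add_sub_cancel_left, RLint, RLint]
  congr 1
  rw [intervalIntegral.integral_of_le ht.1, intervalIntegral.integral_of_le ht.1]
  refine integral_congr_ae ?_
  filter_upwards [ae_restrict_of_ae_restrict_of_subset
    (Ioc_subset_Icc_self.trans (Icc_subset_Icc_right ht.2)) hDφ] with τ h
  rw [h]
end

section
/- Let 0 < α ≤ 1, T > 0, a ∈ L^∞(0,T), and let θ ∈ (0,T) be a Lebesgue point of a. Then lim_{t→θ⁺} (1/(t−θ)^α) ∫_θ^t (t−τ)^{α−1} |a(τ) − a(θ)| dτ = 0. -/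
/-!
Write `f τ = |a τ - a θ|`, which is a.e. bounded by some `M` on `(0,T)`, and `h = t - θ`.
For `0 < δ < 1` split the integral at `t - δ h`. On `(θ, t - δ h)` the kernel `(t - τ)^(α-1)` is
at most `(δ h)^(α-1)`, since `α ≤ 1`; on `(t - δ h, t)` bound `f` by `M` and integrate the kernel
exactly. After division by `h^α` this gives (`weighted_average_le`)
`h^(-α) ∫_θ^t (t-τ)^(α-1) f ≤ δ^(α-1) * (h⁻¹ ∫_{θ-h}^{θ+h} f) + (M / α) δ^α`.
For fixed `δ` the first term tends to `0` by the Lebesgue point property, and the second is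
arbitrarily small with `δ`.
-/

open MeasureTheory Set Filter Topology

lemma intervalIntegrable_kernel {α : ℝ} (hα0 : 0 < α) (t p q : ℝ) :
    IntervalIntegrable (fun τ : ℝ => (t - τ) ^ (α - 1)) volume p q := by
  have h := (intervalIntegral.intervalIntegrable_rpow' (a := t - p) (b := t - q)
    (r := α - 1) (by linarith)).comp_sub_left t
  simpa using h

/-- The splitting estimate, for a nonnegative function `f` that is a.e. bounded by `M` on an
interval `(θ - h, θ + h)`. -/
lemma weighted_average_le {α θ h δ M : ℝ} (hα0 : 0 < α) (hα1 : α ≤ 1) (hh : 0 < h)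
    (hδ0 : 0 < δ) (hδ1 : δ < 1) (f : ℝ → ℝ) (hf0 : ∀ τ, 0 ≤ f τ)
    (hf : AEStronglyMeasurable f (volume.restrict (Ioc (θ - h) (θ + h))))
    (hfM : ∀ᵐ τ ∂(volume.restrict (Ioc (θ - h) (θ + h))), f τ ≤ M) :
    (1 / h ^ α) * ∫ τ in θ..(θ + h), (θ + h - τ) ^ (α - 1) * f τ ≤
      δ ^ (α - 1) * (h⁻¹ * ∫ τ in (θ - h)..(θ + h), f τ) + M / α * δ ^ α := by
  have hδh : 0 < δ * h := mul_pos hδ0 hh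
  have hδh' : δ * h < h := by nlinarith
  set s := θ + h - δ * h with hs
  have hfI : IntegrableOn f (Ioc (θ - h) (θ + h)) volume := by
    refine Integrable.of_bound hf M ?_
    filter_upwards [hfM] with τ hτ
    rwa [Real.norm_of_nonneg (hf0 τ)]
  have hfII : IntervalIntegrable f volume (θ - h) (θ + h) :=
    (intervalIntegrable_iff_integrableOn_Ioc_of_le (by linarith)).2 hfI
  have hgI : IntervalIntegrable (fun τ => (θ + h - τ) ^ (α - 1) * f τ) volume
      (θ - h) (θ + h) := by
    rw [intervalIntegrable_iff_integrableOn_Ioc_of_le (by linarith)]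
    have hk := (intervalIntegrable_iff_integrableOn_Ioc_of_le (by linarith)).1
      (intervalIntegrable_kernel hα0 (θ + h) (θ - h) (θ + h))
    refine Integrable.mul_bdd (c := M) hk hf ?_
    filter_upwards [hfM] with τ hτ
    rwa [Real.norm_of_nonneg (hf0 τ)]
  have sub : ∀ {g : ℝ → ℝ} {p q : ℝ}, IntervalIntegrable g volume (θ - h) (θ + h) →
      θ - h ≤ p → p ≤ q → q ≤ θ + h → IntervalIntegrable g volume p q := by
    intro g p q hg hp hpq hq
    refine hg.mono_set ?_
    rw [uIcc_of_le hpq, uIcc_of_le (by linarith)]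
    exact Icc_subset_Icc hp hq
  have h1 : ∫ τ in θ..s, (θ + h - τ) ^ (α - 1) * f τ
      ≤ (δ * h) ^ (α - 1) * ∫ τ in (θ - h)..(θ + h), f τ := by
    calc ∫ τ in θ..s, (θ + h - τ) ^ (α - 1) * f τ
        ≤ ∫ τ in θ..s, (δ * h) ^ (α - 1) * f τ := by
          refine intervalIntegral.integral_mono_on (by linarith)
            (sub hgI (by linarith) (by linarith) (by linarith))
            ((sub hfII (by linarith) (by linarith) (by linarith)).const_mul _) ?_
          intro τ hτ
          refine mul_le_mul_of_nonneg_right ?_ (hf0 τ)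
          exact Real.rpow_le_rpow_of_nonpos hδh (by linarith [hτ.2]) (by linarith)
      _ = (δ * h) ^ (α - 1) * ∫ τ in θ..s, f τ := intervalIntegral.integral_const_mul _ _
      _ ≤ _ := by
          refine mul_le_mul_of_nonneg_left ?_ (by positivity)
          exact intervalIntegral.integral_mono_interval (by linarith) (by linarith)
            (by linarith) (ae_of_all _ hf0) hfII
  have h2 : ∫ τ in s..(θ + h), (θ + h - τ) ^ (α - 1) * f τ ≤ M * ((δ * h) ^ α / α) := by
    calc ∫ τ in s..(θ + h), (θ + h - τ) ^ (α - 1) * f τ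
        ≤ ∫ τ in s..(θ + h), (θ + h - τ) ^ (α - 1) * M := by
          refine intervalIntegral.integral_mono_ae_restrict (by linarith)
            (sub hgI (by linarith) (by linarith) (by linarith))
            ((intervalIntegrable_kernel hα0 _ _ _).mul_const _) ?_
          rw [← restrict_Ioc_eq_restrict_Icc]
          have hsub : Ioc s (θ + h) ⊆ Ioc (θ - h) (θ + h) :=
            Ioc_subset_Ioc_left (by linarith)
          filter_upwards [ae_restrict_of_ae_restrict_of_subset hsub hfM,
            ae_restrict_mem measurableSet_Ioc] with τ hτ hmem
          exact mul_le_mul_of_nonneg_left hτ (Real.rpow_nonneg (by linarith [hmem.2]) _)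
      _ = M * ((δ * h) ^ α / α) := by
          rw [intervalIntegral.integral_mul_const,
            intervalIntegral.integral_comp_sub_left (fun x => x ^ (α - 1)) (θ + h),
            integral_rpow (Or.inl (by linarith))]
          simp [hs, hα0.ne', mul_comm]
  have h3 := intervalIntegral.integral_add_adjacent_intervals
    (sub hgI (by linarith) (by linarith) (by linarith) : IntervalIntegrable _ _ θ s)
    (sub hgI (by linarith) (by linarith) le_rfl : IntervalIntegrable _ _ s (θ + h))
  have hp : 0 < h ^ α := Real.rpow_pos_of_pos hh _
  rw [← h3]
  refine (mul_le_mul_of_nonneg_left (add_le_add h1 h2) (by positivity)).trans (le_of_eq ?_)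
  rw [Real.mul_rpow hδ0.le hh.le, Real.mul_rpow hδ0.le hh.le, Real.rpow_sub_one hh.ne']
  field_simp

/-- for `a ∈ L^∞(0,T)`, a Lebesgue point `θ ∈ (0,T)` of `a`, and `0 < α ≤ 1`,
`lim_{t→θ⁺} (1/(t−θ)^α) ∫_θ^t (t−τ)^{α−1} |a(τ) − a(θ)| dτ = 0`. -/
theorem limit_at_lebesgue_point (α T : ℝ) (hα0 : 0 < α) (hα1 : α ≤ 1) (hT : 0 < T)
    (a : ℝ → ℝ)
    (hmeas : AEStronglyMeasurable a (volume.restrict (Ioo (0:ℝ) T)))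
    (hbdd : ∃ C : ℝ, ∀ᵐ t ∂(volume.restrict (Ioo (0:ℝ) T)), |a t| ≤ C)
    (θ : ℝ) (hθ : θ ∈ Ioo (0:ℝ) T)
    (hLeb : Tendsto (fun ε : ℝ => ε⁻¹ * ∫ τ in (θ - ε)..(θ + ε), |a τ - a θ|)
      (𝓝[>] 0) (𝓝 0)) :
    Tendsto (fun t : ℝ => (1 / (t - θ) ^ α) * ∫ τ in θ..t, (t - τ) ^ (α - 1) * |a τ - a θ|)
      (𝓝[>] θ) (𝓝 0) := by
  obtain ⟨C, hC⟩ := hbdd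
  set M := C + |a θ|
  have hshift : Tendsto (fun t : ℝ => t - θ) (𝓝[>] θ) (𝓝[>] 0) := by
    refine tendsto_nhdsWithin_iff.2 ⟨?_, ?_⟩
    · have : Tendsto (fun t : ℝ => t - θ) (𝓝 θ) (𝓝 (θ - θ)) :=
        (continuous_id.sub continuous_const).tendsto θ
      rw [sub_self] at this
      exact this.mono_left nhdsWithin_le_nhds
    · filter_upwards [self_mem_nhdsWithin] with t ht
      exact mem_Ioi.2 (sub_pos.2 (mem_Ioi.1 ht))
  have hL := hLeb.comp hshift
  rw [Metric.tendsto_nhds]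
  intro η hη
  have hδlim : Tendsto (fun δ : ℝ => M / α * δ ^ α) (𝓝[>] 0) (𝓝 0) := by
    have : Tendsto (fun δ : ℝ => M / α * δ ^ α) (𝓝 0) (𝓝 (M / α * 0 ^ α)) :=
      ((Real.continuousAt_rpow_const 0 α (Or.inr hα0.le)).tendsto).const_mul _
    rw [Real.zero_rpow hα0.ne', mul_zero] at this
    exact this.mono_left nhdsWithin_le_nhds
  obtain ⟨δ, hδM, hδ0, hδ1⟩ := ((hδlim.eventually_lt_const (half_pos hη)).and
    (Ioo_mem_nhdsGT (zero_lt_one' ℝ))).exists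
  have hL' := hL.const_mul (δ ^ (α - 1))
  rw [mul_zero] at hL'
  have hsmall : Ioo 0 (min θ (T - θ)) ∈ 𝓝[>] (0:ℝ) :=
    Ioo_mem_nhdsGT (lt_min hθ.1 (sub_pos.2 hθ.2))
  filter_upwards [hL'.eventually_lt_const (half_pos hη), hshift hsmall] with t ht hmem
  have hh : 0 < t - θ := hmem.1
  have hh1 : t - θ < θ := hmem.2.trans_le (min_le_left _ _)
  have hh2 : t - θ < T - θ := hmem.2.trans_le (min_le_right _ _)
  have hsub : Ioc (θ - (t - θ)) (θ + (t - θ)) ⊆ Ioo 0 T := fun x hx =>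
    ⟨by linarith [hx.1], by linarith [hx.2]⟩
  have key := weighted_average_le (M := M) hα0 hα1 hh hδ0 hδ1 (fun τ => |a τ - a θ|)
    (fun _ => abs_nonneg _)
    (((hmeas.sub aestronglyMeasurable_const).norm).mono_measure
      (Measure.restrict_mono hsub le_rfl))
    (by
      filter_upwards [ae_restrict_of_ae_restrict_of_subset hsub hC] with τ hτ
      exact (abs_sub _ _).trans (by simpa [M] using hτ))
  rw [add_sub_cancel] at key
  have hnonneg : 0 ≤ (1 / (t - θ) ^ α) * ∫ τ in θ..t, (t - τ) ^ (α - 1) * |a τ - a θ| := by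
    refine mul_nonneg (by positivity) (intervalIntegral.integral_nonneg (by linarith) ?_)
    intro τ hτ
    exact mul_nonneg (Real.rpow_nonneg (by linarith [hτ.2]) _) (abs_nonneg _)
  rw [Real.dist_0_eq_abs, abs_of_nonneg hnonneg]
  simp only [Function.comp, add_sub_cancel] at ht
  linarith
end

section
/- Let 0 < α < 1, T > 0, h > 0, a(·), b(·) ∈ L^∞([0,T],ℝ^{n×n}), f ∈ L^∞([0,T],ℝⁿ), y₀ ∈ ℝⁿ, and φ ∈ C([−h,0),ℝⁿ) bounded. Then the Cauchy problem ^C D^α_{0+} y(t) = a(t) y(t) + b(t) y(t−h) + f(t) for a.e. t ∈ [0,T], with y(0) = y₀ and y(t) = φ(t) for −h ≤ t < 0, has a unique solution y ∈ AC^α_∞([0,T],ℝⁿ). -/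
/-!
The Cauchy problem is equivalent to the weakly singular Volterra equation
`y = y₀ + I^α (a y + b y(· - h) + f)` on `[0,T]`, where `y = φ` on `[-h,0)`.

The equivalence is `caputoD_ae_eq`: if `y = y 0 + I^α g` with `g` essentially bounded, then
`^C D^α y = g` a.e. Indeed `I^{1-α} I^α g` is the primitive of `g` (`integral_kernel_RLint`, by
Fubini and Euler's beta integral `beta_kernel`), so Lebesgue differentiation applies. Hence the
density `g` of a solution must coincide a.e. with the right-hand side of the equation.

The Volterra equation is solved by Banach's fixed point theorem in `C([0,T], ℝⁿ)`
(`exists_unique_volterra`). The unknown is `u(t) = e^{-lam t} y(t)`; in this weighting `I^α` has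
norm at most `lam^{-α}` (`norm_RLint_le_exp`) and the delay does not increase the norm, so the map
is a contraction once `lam` is large compared with the bounds on `a` and `b`. It maps into
continuous functions since `I^α` of an essentially bounded function is Hölder continuous
(`norm_RLint_sub_le`). Every solution is continuous on `[0,T]` for the same reason, so it gives a
fixed point, and uniqueness of the fixed point yields uniqueness of the solution.
-/

open MeasureTheory Set Filter Topology

/-- `y` solves the linear Caputo fractional Cauchy problem with constant delay `h`:
`^C D^α_{0+} y(t) = a(t) y(t) + b(t) y(t−h) + f(t)` a.e. on `[0,T]`, with `y` of the class
`AC^α_∞([0,T],ℝⁿ)`, `y(0) = y₀` and prehistory `y(t) = φ(t)` on `[−h,0)`. -/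
def IsCauchySol {n : ℕ} (α T h : ℝ)
    (a b : ℝ → ((Fin n → ℝ) →L[ℝ] (Fin n → ℝ))) (f : ℝ → (Fin n → ℝ))
    (y₀ : Fin n → ℝ) (φ : ℝ → (Fin n → ℝ)) (y : ℝ → (Fin n → ℝ)) : Prop :=
  (∃ g : ℝ → (Fin n → ℝ), AEStronglyMeasurable g (volume.restrict (Icc (0:ℝ) T)) ∧
      (∃ C : ℝ, ∀ᵐ t ∂(volume.restrict (Icc (0:ℝ) T)), ‖g t‖ ≤ C) ∧
      ∀ t ∈ Icc (0:ℝ) T, y t = y 0 + RLint α g t) ∧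
  (∀ᵐ t ∂(volume.restrict (Icc (0:ℝ) T)),
      caputoD α y t = a t (y t) + b t (y (t - h)) + f t) ∧
  y 0 = y₀ ∧ (∀ t ∈ Ico (-h) (0:ℝ), y t = φ t)

/-! ### Estimates for the fractional integral -/

section Aux

variable {E : Type*} [NormedAddCommGroup E] [NormedSpace ℝ E]

lemma kernel_intervalIntegrable {β : ℝ} (hβ : 0 < β) (c a b : ℝ) :
    IntervalIntegrable (fun τ => (c - τ) ^ (β - 1)) volume a b := by
  have h := (intervalIntegral.intervalIntegrable_rpow' (a := c - a) (b := c - b)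
    (r := β - 1) (by linarith)).comp_sub_left c
  simpa using h

lemma kernel_integral {β : ℝ} (hβ : 0 < β) (c a b : ℝ) :
    ∫ τ in a..b, (c - τ) ^ (β - 1) = ((c - a) ^ β - (c - b) ^ β) / β := by
  rw [intervalIntegral.integral_comp_sub_left (fun x => x ^ (β - 1)) c,
    integral_rpow (Or.inl (by linarith))]
  simp

lemma ae_Ioc_of_Icc {T : ℝ} {p : ℝ → Prop} (h : ∀ᵐ t ∂(volume.restrict (Icc (0:ℝ) T)), p t)
    {a b : ℝ} (ha : 0 ≤ a) (hb : b ≤ T) : ∀ᵐ t ∂(volume.restrict (Ioc a b)), p t :=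
  ae_restrict_of_ae_restrict_of_subset (Ioc_subset_Icc_self.trans (Icc_subset_Icc ha hb)) h

/-- The product of a weakly singular kernel and an essentially bounded function is integrable. -/
lemma kernel_smul_intervalIntegrable {β T C : ℝ} (hβ : 0 < β) {g : ℝ → E}
    (hg : AEStronglyMeasurable g (volume.restrict (Icc (0:ℝ) T)))
    (hC : ∀ᵐ t ∂(volume.restrict (Icc (0:ℝ) T)), ‖g t‖ ≤ C)
    (c : ℝ) {a b : ℝ} (ha : 0 ≤ a) (hab : a ≤ b) (hb : b ≤ T) :
    IntervalIntegrable (fun τ => ((c - τ) ^ (β - 1)) • g τ) volume a b := by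
  rw [intervalIntegrable_iff_integrableOn_Ioc_of_le hab]
  have h1 := (kernel_intervalIntegrable hβ c a b).1
  exact Integrable.smul_bdd h1 C
    (hg.mono_measure (Measure.restrict_mono
      (Ioc_subset_Icc_self.trans (Icc_subset_Icc ha hb)) le_rfl))
    (ae_Ioc_of_Icc hC ha hb)

/-- Euler's beta integral in the case where the exponents sum to `-1`: the value does not depend
on the interval. -/
lemma beta_kernel {α σ s : ℝ} (hα0 : 0 < α) (hα1 : α < 1) (hσ : σ < s) :
    ∫ τ in σ..s, (s - τ) ^ (-α) * (τ - σ) ^ (α - 1) = Real.Gamma α * Real.Gamma (1 - α) := by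
  have h1 : ∫ τ in σ..s, (s - τ) ^ (-α) * (τ - σ) ^ (α - 1)
      = ∫ x in (0:ℝ)..(s - σ), x ^ (α - 1) * ((s - σ) - x) ^ (-α) := by
    have := intervalIntegral.integral_comp_sub_right (a := σ) (b := s)
      (fun x : ℝ => x ^ (α - 1) * ((s - σ) - x) ^ (-α)) σ
    rw [sub_self] at this
    rw [← this]
    congr 1
    ext τ
    rw [mul_comm]
    congr 2
    ring
  -- the real integral is computed as a special case of the complex beta integral
  have h2 := Complex.betaIntegral_scaled (α : ℂ) ((1 - α : ℝ) : ℂ) (sub_pos.2 hσ)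
  have h3 : (((α : ℂ)) + ((1 - α : ℝ) : ℂ) - 1) = 0 := by push_cast; ring
  rw [h3, Complex.cpow_zero, one_mul, Complex.betaIntegral_eq_Gamma_mul_div _ _ (by simpa)
    (by simpa), Complex.Gamma_ofReal, Complex.Gamma_ofReal] at h2
  have h4 : ((α : ℂ)) + ((1 - α : ℝ) : ℂ) = 1 := by push_cast; ring
  rw [h4, Complex.Gamma_one, div_one] at h2
  rw [h1]
  have h5 : ((∫ x in (0:ℝ)..(s - σ), x ^ (α - 1) * ((s - σ) - x) ^ (-α) : ℝ) : ℂ)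
      = ((Real.Gamma α * Real.Gamma (1 - α) : ℝ) : ℂ) := by
    rw [Complex.ofReal_mul, ← h2, ← intervalIntegral.integral_ofReal]
    refine intervalIntegral.integral_congr fun x hx => ?_
    rw [uIcc_of_le (sub_pos.2 hσ).le] at hx
    rw [Complex.ofReal_mul, Complex.ofReal_cpow hx.1, Complex.ofReal_cpow (sub_nonneg.2 hx.2)]
    congr 2 <;> push_cast <;> ring_nf
  exact_mod_cast h5

lemma beta_kernel_intervalIntegrable {α σ s : ℝ} (hα0 : 0 < α) (hα1 : α < 1) (hσ : σ < s) :
    IntervalIntegrable (fun τ => (s - τ) ^ (-α) * (τ - σ) ^ (α - 1)) volume σ s := by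
  apply intervalIntegral.intervalIntegrable_of_integral_ne_zero
  rw [beta_kernel hα0 hα1 hσ]
  exact (mul_pos (Real.Gamma_pos_of_pos hα0) (Real.Gamma_pos_of_pos (by linarith))).ne'

lemma RLint_zero (α : ℝ) (g : ℝ → E) : RLint α g 0 = 0 := by
  simp [RLint]

lemma RLint_congr {α T : ℝ} {g g' : ℝ → E}
    (h : ∀ᵐ t ∂(volume.restrict (Icc (0:ℝ) T)), g t = g' t) {t : ℝ} (ht : t ∈ Icc (0:ℝ) T) :
    RLint α g t = RLint α g' t := by
  unfold RLint
  congr 1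
  rw [intervalIntegral.integral_of_le ht.1, intervalIntegral.integral_of_le ht.1]
  refine integral_congr_ae ?_
  filter_upwards [ae_Ioc_of_Icc h le_rfl ht.2] with τ hτ
  rw [hτ]

lemma RLint_sub {α T C C' : ℝ} (hα : 0 < α) {g g' : ℝ → E}
    (hg : AEStronglyMeasurable g (volume.restrict (Icc (0:ℝ) T)))
    (hC : ∀ᵐ t ∂(volume.restrict (Icc (0:ℝ) T)), ‖g t‖ ≤ C)
    (hg' : AEStronglyMeasurable g' (volume.restrict (Icc (0:ℝ) T)))
    (hC' : ∀ᵐ t ∂(volume.restrict (Icc (0:ℝ) T)), ‖g' t‖ ≤ C')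
    {t : ℝ} (ht : t ∈ Icc (0:ℝ) T) :
    RLint α g t - RLint α g' t = RLint α (fun τ => g τ - g' τ) t := by
  unfold RLint
  rw [← smul_sub, ← intervalIntegral.integral_sub
    (kernel_smul_intervalIntegrable hα hg hC t le_rfl ht.1 ht.2)
    (kernel_smul_intervalIntegrable hα hg' hC' t le_rfl ht.1 ht.2)]
  simp only [smul_sub]

/-- The fractional integral contracts the exponentially weighted sup norm by `lam ^ (-α)`:
this is the Laplace transform of the kernel, `∫₀^∞ x^{α-1} e^{-lam x} dx = Γ(α) lam^{-α}`. -/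
lemma norm_RLint_le_exp {α T C lam : ℝ} (hα : 0 < α) (hlam : 0 < lam) (hC0 : 0 ≤ C) {g : ℝ → E}
    (hC : ∀ᵐ t ∂(volume.restrict (Icc (0:ℝ) T)), ‖g t‖ ≤ C * Real.exp (lam * t))
    {t : ℝ} (ht : t ∈ Icc (0:ℝ) T) :
    ‖RLint α g t‖ ≤ C * lam ^ (-α) * Real.exp (lam * t) := by
  have hΓ := Real.Gamma_pos_of_pos hα
  have hI := Real.integral_rpow_mul_exp_neg_mul_Ioi hα hlam
  have hint : IntegrableOn (fun x : ℝ => x ^ (α - 1) * Real.exp (-(lam * x))) (Ioi 0) :=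
    .of_integral_ne_zero (by rw [hI]; positivity)
  have hsub : ∫ τ in (0:ℝ)..t, (t - τ) ^ (α - 1) * Real.exp (-(lam * (t - τ)))
      ≤ (1 / lam) ^ α * Real.Gamma α := by
    rw [intervalIntegral.integral_comp_sub_left
      (fun x => x ^ (α - 1) * Real.exp (-(lam * x))) t, sub_self, sub_zero,
      intervalIntegral.integral_of_le ht.1, ← hI]
    refine setIntegral_mono_set hint ?_ (Ioc_subset_Ioi_self.eventuallyLE)
    filter_upwards [ae_restrict_mem measurableSet_Ioi] with x hx
    exact mul_nonneg (Real.rpow_nonneg (le_of_lt hx) _) (Real.exp_nonneg _)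
  have hcomp : IntervalIntegrable
      (fun τ => (t - τ) ^ (α - 1) * Real.exp (-(lam * (t - τ)))) volume 0 t :=
    (kernel_intervalIntegrable hα t 0 t).mul_continuousOn (by fun_prop)
  have hbound : ‖∫ τ in (0:ℝ)..t, ((t - τ) ^ (α - 1)) • g τ‖
      ≤ ∫ τ in (0:ℝ)..t, C * Real.exp (lam * t) *
          ((t - τ) ^ (α - 1) * Real.exp (-(lam * (t - τ)))) := by
    refine intervalIntegral.norm_integral_le_of_norm_le ht.1 ?_ (hcomp.const_mul _)
    have h1 := ae_Ioc_of_Icc hC le_rfl ht.2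
    rw [ae_restrict_iff' measurableSet_Ioc] at h1
    filter_upwards [h1] with τ hτ hm
    have hk : 0 ≤ (t - τ) ^ (α - 1) := Real.rpow_nonneg (sub_nonneg.2 hm.2) _
    rw [norm_smul, Real.norm_of_nonneg hk]
    calc (t - τ) ^ (α - 1) * ‖g τ‖ ≤ (t - τ) ^ (α - 1) * (C * Real.exp (lam * τ)) :=
          mul_le_mul_of_nonneg_left (hτ hm) hk
      _ = _ := by
          have : Real.exp (lam * τ) = Real.exp (lam * t) * Real.exp (-(lam * (t - τ))) := by
            rw [← Real.exp_add]; congr 1; ring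
          rw [this]; ring
  rw [intervalIntegral.integral_const_mul] at hbound
  unfold RLint
  rw [norm_smul, norm_inv, Real.norm_of_nonneg hΓ.le, inv_mul_le_iff₀ hΓ]
  refine hbound.trans ((mul_le_mul_of_nonneg_left hsub (by positivity)).trans_eq ?_)
  rw [one_div, Real.inv_rpow hlam.le, Real.rpow_neg hlam.le]
  ring

/-- Fractional integrals of essentially bounded functions are Hölder continuous of order `α`;
the constant is not optimal. -/
lemma norm_RLint_sub_le {α T C : ℝ} (hα0 : 0 < α) (hα1 : α < 1) (hC0 : 0 ≤ C) {g : ℝ → E}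
    (hg : AEStronglyMeasurable g (volume.restrict (Icc (0:ℝ) T)))
    (hC : ∀ᵐ t ∂(volume.restrict (Icc (0:ℝ) T)), ‖g t‖ ≤ C)
    {s t : ℝ} (hs : 0 ≤ s) (hst : s ≤ t) (ht : t ≤ T) :
    ‖RLint α g t - RLint α g s‖ ≤ (Real.Gamma α)⁻¹ * (C * (2 / α)) * (t - s) ^ α := by
  have hΓ := Real.Gamma_pos_of_pos hα0
  have i1 := kernel_smul_intervalIntegrable hα0 hg hC t le_rfl hs (hst.trans ht)
  have i2 := kernel_smul_intervalIntegrable hα0 hg hC t hs hst ht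
  have i3 := kernel_smul_intervalIntegrable hα0 hg hC s le_rfl hs (hst.trans ht)
  have e : RLint α g t - RLint α g s = (Real.Gamma α)⁻¹ •
      ((∫ τ in (0:ℝ)..s, (((t - τ) ^ (α - 1)) • g τ - ((s - τ) ^ (α - 1)) • g τ))
        + ∫ τ in s..t, ((t - τ) ^ (α - 1)) • g τ) := by
    unfold RLint
    rw [← smul_sub, intervalIntegral.integral_sub i1 i3,
      ← intervalIntegral.integral_add_adjacent_intervals i1 i2]
    congr 1
    abel
  -- the kernel is decreasing in the distance to the endpoint, so its increment has a sign and
  -- integrates explicitly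
  have b1 : ‖∫ τ in (0:ℝ)..s, (((t - τ) ^ (α - 1)) • g τ - ((s - τ) ^ (α - 1)) • g τ)‖
      ≤ ∫ τ in (0:ℝ)..s, C * ((s - τ) ^ (α - 1) - (t - τ) ^ (α - 1)) := by
    refine intervalIntegral.norm_integral_le_of_norm_le hs ?_
      (((kernel_intervalIntegrable hα0 s 0 s).sub
        (kernel_intervalIntegrable hα0 t 0 s)).const_mul _)
    have h1 := ae_Ioc_of_Icc hC le_rfl (hst.trans ht)
    rw [ae_restrict_iff' measurableSet_Ioc] at h1
    -- at `τ = s` the kernel `(s - τ) ^ (α - 1)` takes the junk value `0`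
    have h2 : ∀ᵐ τ : ℝ, τ ≠ s := by simp [ae_iff, measure_singleton]
    filter_upwards [h1, h2] with τ hτ hne hm
    have hlt : τ < s := lt_of_le_of_ne hm.2 hne
    have hk : (t - τ) ^ (α - 1) ≤ (s - τ) ^ (α - 1) :=
      Real.rpow_le_rpow_of_nonpos (sub_pos.2 hlt) (by linarith) (by linarith)
    rw [← sub_smul, norm_smul, Real.norm_of_nonpos (by linarith), mul_comm C, neg_sub]
    exact mul_le_mul_of_nonneg_left (hτ hm) (by linarith)
  have b2 : ‖∫ τ in s..t, ((t - τ) ^ (α - 1)) • g τ‖ ≤ ∫ τ in s..t, C * (t - τ) ^ (α - 1) := by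
    refine intervalIntegral.norm_integral_le_of_norm_le hst ?_
      ((kernel_intervalIntegrable hα0 t s t).const_mul _)
    have h1 := ae_Ioc_of_Icc hC hs ht
    rw [ae_restrict_iff' measurableSet_Ioc] at h1
    filter_upwards [h1] with τ hτ hm
    have hk : 0 ≤ (t - τ) ^ (α - 1) := Real.rpow_nonneg (sub_nonneg.2 hm.2) _
    rw [norm_smul, Real.norm_of_nonneg hk, mul_comm C]
    exact mul_le_mul_of_nonneg_left (hτ hm) hk
  rw [intervalIntegral.integral_const_mul, intervalIntegral.integral_sub
    (kernel_intervalIntegrable hα0 s 0 s) (kernel_intervalIntegrable hα0 t 0 s),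
    kernel_integral hα0, kernel_integral hα0, sub_self, Real.zero_rpow hα0.ne'] at b1
  rw [intervalIntegral.integral_const_mul, kernel_integral hα0, sub_self,
    Real.zero_rpow hα0.ne'] at b2
  simp only [sub_zero] at b1 b2
  have hmono : s ^ α ≤ t ^ α := Real.rpow_le_rpow hs hst hα0.le
  rw [e, norm_smul, norm_inv, Real.norm_of_nonneg hΓ.le, mul_assoc]
  refine mul_le_mul_of_nonneg_left ((norm_add_le _ _).trans ((add_le_add b1 b2).trans ?_))
    (inv_nonneg.2 hΓ.le)
  rw [← mul_add, mul_assoc]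
  refine mul_le_mul_of_nonneg_left ?_ hC0
  rw [← sub_div, ← add_div, div_mul_eq_mul_div]
  gcongr
  linarith

lemma continuousOn_RLint {α T C : ℝ} (hα0 : 0 < α) (hα1 : α < 1) {g : ℝ → E}
    (hg : AEStronglyMeasurable g (volume.restrict (Icc (0:ℝ) T)))
    (hC : ∀ᵐ t ∂(volume.restrict (Icc (0:ℝ) T)), ‖g t‖ ≤ C) :
    ContinuousOn (RLint α g) (Icc (0:ℝ) T) := by
  have hC' : ∀ᵐ t ∂(volume.restrict (Icc (0:ℝ) T)), ‖g t‖ ≤ |C| :=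
    hC.mono fun t ht => ht.trans (le_abs_self C)
  set K := (Real.Gamma α)⁻¹ * (|C| * (2 / α)) with hK
  have key : ∀ x ∈ Icc (0:ℝ) T, ∀ t ∈ Icc (0:ℝ) T,
      ‖RLint α g t - RLint α g x‖ ≤ K * |t - x| ^ α := by
    intro x hx t ht
    rcases le_total x t with h | h
    · rw [abs_of_nonneg (sub_nonneg.2 h)]
      exact norm_RLint_sub_le hα0 hα1 (abs_nonneg C) hg hC' hx.1 h ht.2
    · rw [abs_sub_comm, abs_of_nonneg (sub_nonneg.2 h), norm_sub_rev]
      exact norm_RLint_sub_le hα0 hα1 (abs_nonneg C) hg hC' ht.1 h hx.2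
  intro x hx
  rw [ContinuousWithinAt, tendsto_iff_norm_sub_tendsto_zero]
  have hlim : Tendsto (fun t : ℝ => K * |t - x| ^ α) (𝓝[Icc 0 T] x) (𝓝 0) := by
    have : Continuous (fun t : ℝ => K * |t - x| ^ α) :=
      continuous_const.mul ((by fun_prop : Continuous fun t : ℝ => |t - x|).rpow_const
        fun _ => Or.inr hα0.le)
    have h := (this.tendsto x).mono_left (nhdsWithin_le_nhds (s := Icc 0 T))
    simpa [Real.zero_rpow hα0.ne'] using h
  refine squeeze_zero' (Eventually.of_forall fun _ => norm_nonneg _) ?_ hlim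
  filter_upwards [self_mem_nhdsWithin] with t ht using key x hx t ht

/-! ### The Caputo derivative of a fractional integral -/

/-- The semigroup law `I^{1-α} I^α = I^1`: after Fubini on the triangle `0 < σ < τ < s`, the inner
integral in `τ` is the beta integral `Γ(α) Γ(1-α)`. -/
lemma integral_kernel_RLint [CompleteSpace E] {α T C : ℝ} (hα0 : 0 < α) (hα1 : α < 1) {g : ℝ → E}
    (hg : AEStronglyMeasurable g (volume.restrict (Icc (0:ℝ) T)))
    (hC : ∀ᵐ t ∂(volume.restrict (Icc (0:ℝ) T)), ‖g t‖ ≤ C)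
    {s : ℝ} (hs : s ∈ Icc (0:ℝ) T) :
    (Real.Gamma (1 - α))⁻¹ • ∫ τ in (0:ℝ)..s, ((s - τ) ^ (-α)) • RLint α g τ
      = ∫ σ in (0:ℝ)..s, g σ := by
  have hΓ := Real.Gamma_pos_of_pos hα0
  have hΓ' := Real.Gamma_pos_of_pos (s := 1 - α) (by linarith)
  set μ := volume.restrict (Ioc (0:ℝ) s) with hμ
  have hgμ : AEStronglyMeasurable g μ := hg.mono_measure (Measure.restrict_mono
      (Ioc_subset_Icc_self.trans (Icc_subset_Icc le_rfl hs.2)) le_rfl)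
  have hCμ := ae_Ioc_of_Icc hC le_rfl hs.2
  have hgi : Integrable g μ :=
    Integrable.mono' (integrable_const C) hgμ hCμ
  -- the kernel of the iterated integral, supported on the triangle `σ < τ`
  let κ : ℝ × ℝ → ℝ := {p : ℝ × ℝ | p.2 < p.1}.indicator
    fun p => (s - p.1) ^ (-α) * (p.1 - p.2) ^ (α - 1)
  have hκm : Measurable κ := Measurable.indicator (by fun_prop)
    (measurableSet_lt measurable_snd measurable_fst)
  have hsec : ∀ σ, (fun τ => κ (τ, σ)) = (Ioi σ).indicator
      (fun τ => (s - τ) ^ (-α) * (τ - σ) ^ (α - 1)) := by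
    intro σ; ext τ; simp [κ, indicator]
  have hset : ∀ σ, 0 < σ → Ioi σ ∩ Ioc 0 s = Ioc σ s := by
    intro σ hσ; ext x; simp only [mem_inter_iff, mem_Ioi, mem_Ioc]
    exact ⟨fun h => ⟨h.1, h.2.2⟩, fun h => ⟨h.1, hσ.trans h.1, h.2⟩⟩
  have hκi : ∀ σ, 0 < σ → σ < s → Integrable (fun τ => κ (τ, σ)) μ := by
    intro σ h0 h1
    rw [hsec, integrable_indicator_iff measurableSet_Ioi, IntegrableOn, hμ,
      Measure.restrict_restrict measurableSet_Ioi, hset σ h0]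
    exact (beta_kernel_intervalIntegrable hα0 hα1 h1).1
  have hκv : ∀ σ, 0 < σ → σ < s → ∫ τ, κ (τ, σ) ∂μ = Real.Gamma α * Real.Gamma (1 - α) := by
    intro σ h0 h1
    rw [hsec, integral_indicator measurableSet_Ioi, hμ,
      Measure.restrict_restrict measurableSet_Ioi, hset σ h0, ← beta_kernel hα0 hα1 h1,
      intervalIntegral.integral_of_le h1.le]
  have hκ0 : ∀ σ, ∀ᵐ τ ∂μ, 0 ≤ κ (τ, σ) := by
    intro σ
    filter_upwards [ae_restrict_mem measurableSet_Ioc] with τ hτ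
    refine indicator_apply_nonneg fun h => ?_
    exact mul_nonneg (Real.rpow_nonneg (sub_nonneg.2 hτ.2) _)
      (Real.rpow_nonneg (sub_nonneg.2 (le_of_lt h)) _)
  have hσs : ∀ᵐ σ ∂μ, 0 < σ ∧ σ < s := by
    have h2 : ∀ᵐ τ ∂μ, τ ≠ s := ae_restrict_of_ae (by simp [ae_iff, measure_singleton])
    filter_upwards [ae_restrict_mem measurableSet_Ioc, h2] with τ hτ hne
    exact ⟨hτ.1, lt_of_le_of_ne hτ.2 hne⟩
  have hF : Integrable (fun p : ℝ × ℝ => κ p • g p.2) (μ.prod μ) := by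
    have hm : AEStronglyMeasurable (fun p : ℝ × ℝ => κ p • g p.2) (μ.prod μ) :=
      hκm.aestronglyMeasurable.smul hgμ.comp_snd
    rw [integrable_prod_iff' hm]
    constructor
    · filter_upwards [hσs] with σ hσ
      exact (hκi σ hσ.1 hσ.2).smul_const _
    · refine (hgi.norm.const_mul (Real.Gamma α * Real.Gamma (1 - α))).congr ?_
      filter_upwards [hσs] with σ hσ
      rw [← hκv σ hσ.1 hσ.2, ← integral_mul_const]
      refine integral_congr_ae ?_
      filter_upwards [hκ0 σ] with τ hτ
      rw [norm_smul, Real.norm_of_nonneg hτ]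
  have hswap := integral_integral_swap (f := fun τ σ => κ (τ, σ) • g σ) hF
  have hR : ∫ σ, ∫ τ, κ (τ, σ) • g σ ∂μ ∂μ
      = (Real.Gamma α * Real.Gamma (1 - α)) • ∫ σ, g σ ∂μ := by
    rw [← integral_smul]
    refine integral_congr_ae ?_
    filter_upwards [hσs] with σ hσ
    rw [integral_smul_const, hκv σ hσ.1 hσ.2]
  have hL : ∫ τ, ∫ σ, κ (τ, σ) • g σ ∂μ ∂μ
      = ∫ τ, Real.Gamma α • ((s - τ) ^ (-α)) • RLint α g τ ∂μ := by
    refine integral_congr_ae ?_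
    filter_upwards [ae_restrict_mem measurableSet_Ioc] with τ hτ
    have h1 : (fun σ => κ (τ, σ) • g σ) = (Iio τ).indicator
        (fun σ => ((s - τ) ^ (-α)) • ((τ - σ) ^ (α - 1)) • g σ) := by
      ext σ
      by_cases h : σ < τ <;> simp [κ, h, smul_smul]
    have h2 : Iio τ ∩ Ioc 0 s = Ioo 0 τ := by
      ext x; simp only [mem_inter_iff, mem_Iio, mem_Ioc, mem_Ioo]
      exact ⟨fun h => ⟨h.2.1, h.1⟩, fun h => ⟨h.2, h.1, h.2.le.trans hτ.2⟩⟩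
    rw [h1, integral_indicator measurableSet_Iio, hμ, Measure.restrict_restrict measurableSet_Iio,
      h2, integral_smul, ← integral_Ioc_eq_integral_Ioo, RLint,
      intervalIntegral.integral_of_le hτ.1.le, smul_comm (Real.Gamma α), smul_inv_smul₀ hΓ.ne']
  rw [hL, hR, integral_smul, mul_smul] at hswap
  have h3 := smul_right_injective E hΓ.ne' hswap
  rw [intervalIntegral.integral_of_le hs.1, intervalIntegral.integral_of_le hs.1]
  rw [h3, inv_smul_smul₀ hΓ'.ne']

/-- On the class `AC^α_∞` the Caputo derivative recovers the density: if `y = y 0 + I^α g` then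
`^C D^α y = g` almost everywhere, by the semigroup law and Lebesgue differentiation. -/
lemma caputoD_ae_eq [CompleteSpace E] {α T C : ℝ} (hα0 : 0 < α) (hα1 : α < 1) (hT : 0 < T)
    {g y : ℝ → E}
    (hg : AEStronglyMeasurable g (volume.restrict (Icc (0:ℝ) T)))
    (hC : ∀ᵐ t ∂(volume.restrict (Icc (0:ℝ) T)), ‖g t‖ ≤ C)
    (hy : ∀ t ∈ Icc (0:ℝ) T, y t = y 0 + RLint α g t) :
    ∀ᵐ t ∂(volume.restrict (Icc (0:ℝ) T)), caputoD α y t = g t := by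
  have hgi : IntervalIntegrable g volume 0 T := by
    rw [intervalIntegrable_iff_integrableOn_Icc_of_le hT.le]
    exact Integrable.mono' (integrable_const C) hg hC
  have hd := hgi.ae_hasDerivAt_integral
  have h0 : ∀ᵐ t : ℝ, t ≠ 0 := by simp [ae_iff, measure_singleton]
  have h1 : ∀ᵐ t : ℝ, t ≠ T := by simp [ae_iff, measure_singleton]
  rw [ae_restrict_iff' measurableSet_Icc]
  filter_upwards [hd, h0, h1] with t hd h0 h1 ht
  rw [uIcc_of_le hT.le] at hd
  have hD := hd ht 0 (left_mem_Icc.2 hT.le)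
  refine (hD.congr_of_eventuallyEq ?_).deriv
  have hnhds : Ioo 0 T ∈ 𝓝 t :=
    Ioo_mem_nhds (lt_of_le_of_ne ht.1 (Ne.symm h0)) (lt_of_le_of_ne ht.2 h1)
  filter_upwards [hnhds] with s hs
  rw [← integral_kernel_RLint hα0 hα1 hg hC (Ioo_subset_Icc_self hs)]
  congr 1
  refine intervalIntegral.integral_congr fun τ hτ => ?_
  rw [uIcc_of_le hs.1.le] at hτ
  rw [hy τ ⟨hτ.1, hτ.2.trans hs.2.le⟩, add_sub_cancel_left]

end Aux

/-! ### The Volterra equation with delay -/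

section DelayEquation

variable {n : ℕ} {T h : ℝ} {a b : ℝ → ((Fin n → ℝ) →L[ℝ] (Fin n → ℝ))} {f φ : ℝ → (Fin n → ℝ)}

/-- The right-hand side `t ↦ a(t) y(t) + b(t) y(t-h) + f(t)` of the delay equation. -/
def delayRHS (h : ℝ) (a b : ℝ → ((Fin n → ℝ) →L[ℝ] (Fin n → ℝ))) (f y : ℝ → (Fin n → ℝ))
    (t : ℝ) : Fin n → ℝ :=
  a t (y t) + b t (y (t - h)) + f t

/-- The function on `ℝ` built from an exponentially weighted unknown `u` on `[0,T]`: it is the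
prehistory `φ` on `[-h,0)` and `e^{lam t} u(t)` elsewhere, `u` being extended by constants outside
`[0,T]`. -/
noncomputable def unweight (lam h : ℝ) (hT : 0 ≤ T) (φ : ℝ → (Fin n → ℝ))
    (u : C(Icc (0:ℝ) T, Fin n → ℝ)) : ℝ → (Fin n → ℝ) :=
  open scoped Classical in
  (Ico (-h) 0).piecewise φ fun t => Real.exp (lam * t) • IccExtend hT u t

lemma unweight_of_mem {lam : ℝ} (hT : 0 ≤ T) (u : C(Icc (0:ℝ) T, Fin n → ℝ)) {t : ℝ}
    (ht : t ∈ Icc (0:ℝ) T) : unweight lam h hT φ u t = Real.exp (lam * t) • u ⟨t, ht⟩ := by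
  rw [unweight, piecewise_eq_of_notMem _ _ _ (fun hm => absurd hm.2 (not_lt.2 ht.1)),
    IccExtend_of_mem]

lemma unweight_of_neg {lam : ℝ} (hT : 0 ≤ T) (u : C(Icc (0:ℝ) T, Fin n → ℝ)) {t : ℝ}
    (ht : t ∈ Ico (-h) (0:ℝ)) : unweight lam h hT φ u t = φ t :=
  piecewise_eq_of_mem _ _ _ ht

lemma measurable_unweight {lam : ℝ} (hT : 0 ≤ T) (hφ : ContinuousOn φ (Ico (-h) (0:ℝ)))
    (u : C(Icc (0:ℝ) T, Fin n → ℝ)) : Measurable (unweight lam h hT φ u) := by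
  have hu : Continuous (IccExtend hT u) := u.continuous.Icc_extend'
  exact hφ.measurable_piecewise (by fun_prop) measurableSet_Ico

lemma norm_unweight_le {lam Cφ : ℝ} (hT : 0 ≤ T) (hlam : 0 < lam)
    (hφ : ∀ t ∈ Ico (-h) (0:ℝ), ‖φ t‖ ≤ Cφ)
    (u : C(Icc (0:ℝ) T, Fin n → ℝ)) {t : ℝ} (ht : t ≤ T) :
    ‖unweight lam h hT φ u t‖ ≤ max Cφ (Real.exp (lam * T) * ‖u‖) := by
  by_cases hm : t ∈ Ico (-h) (0:ℝ)
  · rw [unweight_of_neg hT u hm]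
    exact (hφ t hm).trans (le_max_left _ _)
  · rw [unweight, piecewise_eq_of_notMem _ _ _ hm, norm_smul, Real.norm_of_nonneg (by positivity)]
    refine le_trans ?_ (le_max_right _ _)
    gcongr
    exact u.norm_coe_le_norm _

/-- The exponential weight turns the distance of two unknowns into a pointwise bound that is
stable under the delay, because `e^{lam (t-h)} ≤ e^{lam t}`. -/
lemma norm_unweight_sub_le {lam : ℝ} (hT : 0 ≤ T)
    (u v : C(Icc (0:ℝ) T, Fin n → ℝ)) (t : ℝ) :
    ‖unweight lam h hT φ u t - unweight lam h hT φ v t‖ ≤ dist u v * Real.exp (lam * t) := by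
  by_cases hm : t ∈ Ico (-h) (0:ℝ)
  · rw [unweight_of_neg hT u hm, unweight_of_neg hT v hm, sub_self, norm_zero]
    positivity
  · rw [unweight, unweight, piecewise_eq_of_notMem _ _ _ hm, piecewise_eq_of_notMem _ _ _ hm,
      ← smul_sub, norm_smul, Real.norm_of_nonneg (by positivity), mul_comm, ← dist_eq_norm]
    gcongr
    exact ContinuousMap.dist_apply_le_dist _

/-- Unique solvability of the weighted Volterra equation equivalent to the Cauchy problem, by
Banach's fixed point theorem; `lam` is chosen so large that the contraction constant is at most
`1 / 2`. The right-hand side is also shown to be an admissible density for every `u`. -/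
lemma exists_unique_volterra {α : ℝ} (hα0 : 0 < α) (hα1 : α < 1) (hT : 0 < T) (hh : 0 < h)
    (y₀ : Fin n → ℝ)
    (hameas : AEStronglyMeasurable a (volume.restrict (Icc (0:ℝ) T)))
    (habdd : ∃ C : ℝ, ∀ᵐ t ∂(volume.restrict (Icc (0:ℝ) T)), ‖a t‖ ≤ C)
    (hbmeas : AEStronglyMeasurable b (volume.restrict (Icc (0:ℝ) T)))
    (hbbdd : ∃ C : ℝ, ∀ᵐ t ∂(volume.restrict (Icc (0:ℝ) T)), ‖b t‖ ≤ C)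
    (hfmeas : AEStronglyMeasurable f (volume.restrict (Icc (0:ℝ) T)))
    (hfbdd : ∃ C : ℝ, ∀ᵐ t ∂(volume.restrict (Icc (0:ℝ) T)), ‖f t‖ ≤ C)
    (hφcont : ContinuousOn φ (Ico (-h) (0:ℝ)))
    (hφbdd : ∃ C : ℝ, ∀ t ∈ Ico (-h) (0:ℝ), ‖φ t‖ ≤ C) :
    ∃ lam : ℝ, ∃ u : C(Icc (0:ℝ) T, Fin n → ℝ),
      (AEStronglyMeasurable (delayRHS h a b f (unweight lam h hT.le φ u))
        (volume.restrict (Icc (0:ℝ) T)) ∧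
      ∃ C : ℝ, ∀ᵐ t ∂(volume.restrict (Icc (0:ℝ) T)),
        ‖delayRHS h a b f (unweight lam h hT.le φ u) t‖ ≤ C) ∧
      (∀ t : Icc (0:ℝ) T, u t = Real.exp (-(lam * t)) •
        (y₀ + RLint α (delayRHS h a b f (unweight lam h hT.le φ u)) t)) ∧
      ∀ v : C(Icc (0:ℝ) T, Fin n → ℝ), (∀ t : Icc (0:ℝ) T, v t = Real.exp (-(lam * t)) •
        (y₀ + RLint α (delayRHS h a b f (unweight lam h hT.le φ v)) t)) → v = u := by
  obtain ⟨A, hA⟩ := habdd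
  obtain ⟨B, hB⟩ := hbbdd
  obtain ⟨F, hF⟩ := hfbdd
  obtain ⟨P, hP⟩ := hφbdd
  set K : ℝ := 2 * (|A| + |B|) + 1 with hK
  have hKpos : 0 < K := by positivity
  -- with this choice `lam ^ (-α) = K⁻¹`
  set lam : ℝ := K ^ (1 / α) with hlamdef
  have hlam : 0 < lam := Real.rpow_pos_of_pos hKpos _
  have hlamα : lam ^ (-α) = K⁻¹ := by
    rw [hlamdef, ← Real.rpow_mul hKpos.le, ← Real.rpow_neg_one]
    congr 1
    field_simp
  let G : C(Icc (0:ℝ) T, Fin n → ℝ) → ℝ → (Fin n → ℝ) :=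
    fun u => delayRHS h a b f (unweight lam h hT.le φ u)
  have hGm : ∀ u, AEStronglyMeasurable (G u) (volume.restrict (Icc (0:ℝ) T)) := by
    intro u
    have hY := measurable_unweight (lam := lam) hT.le hφcont u
    have hY' : Measurable fun t => unweight lam h hT.le φ u (t - h) :=
      hY.comp (measurable_id.sub_const h)
    have e1 := (ContinuousLinearMap.id ℝ ((Fin n → ℝ) →L[ℝ] (Fin n → ℝ))).aestronglyMeasurable_comp₂
      hameas (hY.aestronglyMeasurable (μ := volume.restrict (Icc (0:ℝ) T)))
    have e2 := (ContinuousLinearMap.id ℝ ((Fin n → ℝ) →L[ℝ] (Fin n → ℝ))).aestronglyMeasurable_comp₂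
      hbmeas (hY'.aestronglyMeasurable (μ := volume.restrict (Icc (0:ℝ) T)))
    exact (e1.add e2).add hfmeas
  have hGb : ∀ u, ∃ C : ℝ, ∀ᵐ t ∂(volume.restrict (Icc (0:ℝ) T)), ‖G u t‖ ≤ C := by
    intro u
    set M := max P (Real.exp (lam * T) * ‖u‖) with hM
    have hM0 : 0 ≤ M := le_max_of_le_right (by positivity)
    refine ⟨|A| * M + |B| * M + F, ?_⟩
    filter_upwards [hA, hB, hF, ae_restrict_mem measurableSet_Icc] with t h1 h2 h3 ht
    refine norm_add₃_le.trans (add_le_add (add_le_add ?_ ?_) h3)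
    · exact (a t).le_of_opNorm_le_of_le (h1.trans (le_abs_self _))
        (norm_unweight_le hT.le hlam hP u ht.2)
    · exact (b t).le_of_opNorm_le_of_le (h2.trans (le_abs_self _))
        (norm_unweight_le hT.le hlam hP u (by linarith [ht.2]))
  have hGsub : ∀ u v, ∀ᵐ t ∂(volume.restrict (Icc (0:ℝ) T)),
      ‖G u t - G v t‖ ≤ ((|A| + |B|) * dist u v) * Real.exp (lam * t) := by
    intro u v
    filter_upwards [hA, hB] with t h1 h2
    have e : G u t - G v t
        = a t (unweight lam h hT.le φ u t - unweight lam h hT.le φ v t)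
          + b t (unweight lam h hT.le φ u (t - h) - unweight lam h hT.le φ v (t - h)) := by
      simp only [G, delayRHS, map_sub]
      abel
    have hexp : Real.exp (lam * (t - h)) ≤ Real.exp (lam * t) :=
      Real.exp_le_exp.2 (mul_le_mul_of_nonneg_left (by linarith) hlam.le)
    have b1 := (a t).le_of_opNorm_le_of_le (h1.trans (le_abs_self _))
      (norm_unweight_sub_le (h := h) (φ := φ) (lam := lam) hT.le u v t)
    have b2 := (b t).le_of_opNorm_le_of_le (h2.trans (le_abs_self _))
      ((norm_unweight_sub_le (h := h) (φ := φ) (lam := lam) hT.le u v (t - h)).trans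
        (mul_le_mul_of_nonneg_left hexp dist_nonneg))
    rw [e]
    refine (norm_add_le _ _).trans ((add_le_add b1 b2).trans_eq (by ring))
  have hΦ : ∀ u, ∃ w : C(Icc (0:ℝ) T, Fin n → ℝ), ∀ t : Icc (0:ℝ) T,
      w t = Real.exp (-(lam * t)) • (y₀ + RLint α (G u) t) := by
    intro u
    obtain ⟨C, hC⟩ := hGb u
    have hc := (continuousOn_RLint hα0 hα1 (hGm u) hC).domRestrict
    exact ⟨⟨fun t => Real.exp (-(lam * t)) • (y₀ + RLint α (G u) t),
      (by fun_prop : Continuous fun t : Icc (0:ℝ) T => Real.exp (-(lam * t))).smul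
        (continuous_const.add hc)⟩, fun _ => rfl⟩
  choose Φ hΦ using hΦ
  have hcontr : ContractingWith (1 / 2) Φ := by
    refine ⟨by norm_num, LipschitzWith.of_dist_le_mul fun u v => ?_⟩
    refine (ContinuousMap.dist_le (by positivity)).2 fun t => ?_
    obtain ⟨C, hC⟩ := hGb u
    obtain ⟨C', hC'⟩ := hGb v
    have hbd := norm_RLint_le_exp hα0 hlam (by positivity) (hGsub u v) t.2
    rw [dist_eq_norm, hΦ, hΦ, ← smul_sub, add_sub_add_left_eq_sub,
      RLint_sub hα0 (hGm u) hC (hGm v) hC' t.2, norm_smul, Real.norm_of_nonneg (by positivity)]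
    refine (mul_le_mul_of_nonneg_left hbd (by positivity)).trans ?_
    have hee : Real.exp (-(lam * t)) * Real.exp (lam * t) = 1 := by
      rw [← Real.exp_add]; simp
    have hle : (|A| + |B|) * K⁻¹ ≤ 1 / 2 := by
      rw [← div_eq_mul_inv, div_le_iff₀ hKpos, hK]; linarith
    rw [hlamα]
    calc Real.exp (-(lam * t)) * ((|A| + |B|) * dist u v * K⁻¹ * Real.exp (lam * t))
        = ((|A| + |B|) * K⁻¹) * dist u v *
            (Real.exp (-(lam * t)) * Real.exp (lam * t)) := by ring
      _ ≤ _ := by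
          rw [hee, mul_one]
          simpa using mul_le_mul_of_nonneg_right hle (dist_nonneg (x := u) (y := v))
  refine ⟨lam, hcontr.fixedPoint, ⟨hGm _, hGb _⟩, fun t => ?_, fun v hv => ?_⟩
  · have := hΦ hcontr.fixedPoint t
    rwa [hcontr.fixedPoint_isFixedPt] at this
  · refine hcontr.fixedPoint_unique (ContinuousMap.ext fun t => ?_)
    rw [hΦ, hv t]

end DelayEquation

/-- the linear Caputo fractional time-delay Cauchy problem with essentially
bounded measurable coefficients `a, b`, inhomogeneity `f`, and bounded continuous prehistory
`φ` has a unique solution in `AC^α_∞([0,T],ℝⁿ)` (unique on `[−h,T]`). -/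
theorem cauchy_problem_unique_solution {n : ℕ} (α T h : ℝ)
    (hα0 : 0 < α) (hα1 : α < 1) (hT : 0 < T) (hh : 0 < h)
    (a b : ℝ → ((Fin n → ℝ) →L[ℝ] (Fin n → ℝ))) (f : ℝ → (Fin n → ℝ))
    (y₀ : Fin n → ℝ) (φ : ℝ → (Fin n → ℝ))
    (hameas : AEStronglyMeasurable a (volume.restrict (Icc (0:ℝ) T)))
    (habdd : ∃ C : ℝ, ∀ᵐ t ∂(volume.restrict (Icc (0:ℝ) T)), ‖a t‖ ≤ C)
    (hbmeas : AEStronglyMeasurable b (volume.restrict (Icc (0:ℝ) T)))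
    (hbbdd : ∃ C : ℝ, ∀ᵐ t ∂(volume.restrict (Icc (0:ℝ) T)), ‖b t‖ ≤ C)
    (hfmeas : AEStronglyMeasurable f (volume.restrict (Icc (0:ℝ) T)))
    (hfbdd : ∃ C : ℝ, ∀ᵐ t ∂(volume.restrict (Icc (0:ℝ) T)), ‖f t‖ ≤ C)
    (hφcont : ContinuousOn φ (Ico (-h) (0:ℝ)))
    (hφbdd : ∃ C : ℝ, ∀ t ∈ Ico (-h) (0:ℝ), ‖φ t‖ ≤ C) :
    ∃ y : ℝ → (Fin n → ℝ), IsCauchySol α T h a b f y₀ φ y ∧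
      ∀ z : ℝ → (Fin n → ℝ), IsCauchySol α T h a b f y₀ φ z →
        ∀ t ∈ Icc (-h) T, z t = y t := by
  obtain ⟨lam, u, ⟨hGm, C, hGC⟩, hu, huniq⟩ := exists_unique_volterra hα0 hα1 hT hh y₀
    hameas habdd hbmeas hbbdd hfmeas hfbdd hφcont hφbdd
  have hexp : ∀ t : ℝ, Real.exp (lam * t) * Real.exp (-(lam * t)) = 1 := fun t => by
    rw [← Real.exp_add]; simp
  set y := unweight lam h hT.le φ u with hydef
  have hyt : ∀ t ∈ Icc (0:ℝ) T, y t = y₀ + RLint α (delayRHS h a b f y) t := by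
    intro t ht
    rw [hydef, unweight_of_mem hT.le u ht, hu, smul_smul, hexp, one_smul]
  have hy0 : y 0 = y₀ := by
    rw [hyt 0 (left_mem_Icc.2 hT.le), RLint_zero, add_zero]
  have hyφ : ∀ t ∈ Ico (-h) (0:ℝ), y t = φ t := fun t ht => unweight_of_neg hT.le u ht
  have hyrep : ∀ t ∈ Icc (0:ℝ) T, y t = y 0 + RLint α (delayRHS h a b f y) t := by
    rwa [hy0]
  refine ⟨y, ⟨⟨_, hGm, ⟨C, hGC⟩, hyrep⟩,
    caputoD_ae_eq hα0 hα1 hT hGm hGC hyrep, hy0, hyφ⟩, ?_⟩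
  rintro z ⟨⟨g, hgm, ⟨D, hgD⟩, hzrep⟩, hzeq, hz0, hzφ⟩
  have hgz : ∀ᵐ t ∂(volume.restrict (Icc (0:ℝ) T)), g t = delayRHS h a b f z t := by
    filter_upwards [hzeq, caputoD_ae_eq hα0 hα1 hT hgm hgD hzrep] with t h1 h2
    rw [← h2, h1, delayRHS]
  have hzc : ContinuousOn z (Icc (0:ℝ) T) :=
    (continuousOn_const.add (continuousOn_RLint hα0 hα1 hgm hgD)).congr hzrep
  let v : C(Icc (0:ℝ) T, Fin n → ℝ) :=
    ⟨fun t => Real.exp (-(lam * t)) • z t,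
      (by fun_prop : Continuous fun t : Icc (0:ℝ) T => Real.exp (-(lam * t))).smul hzc.domRestrict⟩
  have hvz : ∀ t ∈ Icc (-h) T, unweight lam h hT.le φ v t = z t := by
    intro t ht
    rcases lt_or_ge t 0 with h0 | h0
    · rw [unweight_of_neg hT.le v ⟨ht.1, h0⟩, hzφ t ⟨ht.1, h0⟩]
    · rw [unweight_of_mem hT.le v ⟨h0, ht.2⟩]
      simp only [v, ContinuousMap.coe_mk]
      rw [smul_smul, hexp, one_smul]
  have hvu : v = u := by
    refine huniq v fun t => ?_
    have hcongr : RLint α g t = RLint α (delayRHS h a b f (unweight lam h hT.le φ v)) t := by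
      refine RLint_congr ?_ t.2
      filter_upwards [hgz, ae_restrict_mem measurableSet_Icc] with s hs hsm
      rw [hs, delayRHS, delayRHS, hvz s ⟨by linarith [hsm.1], hsm.2⟩,
        hvz (s - h) ⟨by linarith [hsm.1], by linarith [hsm.2]⟩]
    rw [← hcongr, ← hz0, ← hzrep t t.2]
    rfl
  intro t ht
  rw [← hvz t ht, hvu]
end
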